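/- Let K ⊂ ℝ² be a plane convex body. Then K satisfies the translative constant volume property if and only if Birkhoff orthogonality is symmetric in the norm on ℝ² whose unit ball is the central symmetral ½(K − K); that is, if and only if for all x, y ∈ ℝ², whenever ‖x‖ ≤ ‖x + ty‖ for all t ∈ ℝ then also ‖y‖ ≤ ‖y + tx‖ for all t ∈ ℝ, where ‖·‖ denotes the Minkowski gauge of ½(K − K). -/

import Mathlib

open MeasureTheory Set Pointwise Metric

/-- A convex body: a compact convex set with nonempty interior. -/
def IsConvexBody {n : ℕ} (K : Set (EuclideanSpace ℝ (Fin n))) : Prop :=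
  IsCompact K ∧ Convex ℝ K ∧ (interior K).Nonempty

/-- Two sets touch each other if they intersect and their interiors are disjoint. -/
def Touching {n : ℕ} (A B : Set (EuclideanSpace ℝ (Fin n))) : Prop :=
  (A ∩ B).Nonempty ∧ interior A ∩ interior B = ∅

/-- The translative constant volume property. -/
def TCVP {n : ℕ} (K : Set (EuclideanSpace ℝ (Fin n))) : Prop :=
  ∃ c : ℝ, ∀ v w : EuclideanSpace ℝ (Fin n), Touching (v +ᵥ K) (w +ᵥ K) →
    (volume (convexHull ℝ ((v +ᵥ K) ∪ (w +ᵥ K)))).toReal = c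

/-!
Let `p` be the seminorm with unit ball `K - K` and `ω` an area form. The translates `v + K` and
`w + K` touch exactly when `p (w - v) = 1`, and the convex hull of their union is a translate of
`K + [0, w - v]`. By Cavalieri's principle along `w - v`, its area is `vol K + q (w - v)`, where
`q y = sup {|ω d y| : p d ≤ 1}` is the antinorm of `p`. Hence the translative constant volume
property says that `q = c * p` for some constant `c`.

Birkhoff orthogonality of `x` to `y` is the equality case of `|ω x y| ≤ p x * q y`, so it is
symmetric if `q = c * p`. Conversely, restrict `p` and `q` to a line missing the origin. A support
line of the restriction of `p` at a point `x` determines a direction to which `x` is Birkhoff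
orthogonal, and by symmetry it becomes, after scaling by `q x / p x`, a support line of the
restriction of `q` at `x`. Comparing one-sided derivatives, `q / p` is monotone along the line in
both of its orientations, hence constant.
-/

open Topology Module

section ConvexFunctionsOnTheLine

variable {f g : ℝ → ℝ}

lemma add_rightDeriv_mul_sub_le_of_convexOn (hf : ConvexOn ℝ univ f) (s t : ℝ) :
    f s + derivWithin f (Ioi s) s * (t - s) ≤ f t := by
  rcases lt_trichotomy s t with hst | rfl | hts
  · have := hf.rightDeriv_le_slope_of_mem_interior (x := s) (by simp) (mem_univ t) hst
    rw [slope_def_field, le_div_iff₀ (sub_pos.2 hst)] at this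
    linarith
  · simp
  · have := (hf.slope_le_leftDeriv_of_mem_interior (mem_univ t) (y := s) (by simp) hts).trans
      (hf.leftDeriv_le_rightDeriv_of_mem_interior (by simp))
    rw [slope_def_field, div_le_iff₀ (sub_pos.2 hts)] at this
    linarith

lemma monotone_of_hasDerivWithinAt_Ici_nonneg {f' : ℝ → ℝ} (hf : Continuous f)
    (hderiv : ∀ s, HasDerivWithinAt f (f' s) (Ici s) s) (hf' : ∀ s, 0 ≤ f' s) : Monotone f := by
  intro a b hab
  refine neg_le_neg_iff.1 (image_le_of_deriv_right_le_deriv_boundary (f := fun s => -f s)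
    (B := fun _ => -f a) (B' := 0) hf.neg.continuousOn (fun s _ => (hderiv s).neg) le_rfl
    continuousOn_const (fun s _ => hasDerivWithinAt_const _ _ _)
    (fun s _ => neg_nonpos.2 (hf' s)) ⟨hab, le_rfl⟩)

lemma mul_rightDeriv_le_mul_rightDeriv_of_support (hf : ConvexOn ℝ univ f)
    (hg : ConvexOn ℝ univ g) {s : ℝ}
    (hsupp : ∀ a, (∀ t, f s + a * (t - s) ≤ f t) → ∀ t, g s * (f s + a * (t - s)) ≤ f s * g t) :
    g s * derivWithin f (Ioi s) s ≤ f s * derivWithin g (Ioi s) s := by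
  have hg' := hg.hasDerivWithinAt_rightDeriv_of_mem_interior (x := s) (by simp)
  rw [hasDerivWithinAt_iff_tendsto_slope' (by simp)] at hg'
  refine ge_of_tendsto (hg'.const_mul (f s)) ?_
  filter_upwards [self_mem_nhdsWithin] with t (hst : s < t)
  have := hsupp _ (add_rightDeriv_mul_sub_le_of_convexOn hf s) t
  rw [slope_def_field, ← mul_div_assoc, le_div_iff₀ (sub_pos.2 hst)]
  linarith

lemma monotone_div_of_support (hf : ConvexOn ℝ univ f) (hg : ConvexOn ℝ univ g)
    (hpos : ∀ s, 0 < f s)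
    (hsupp : ∀ s a, (∀ t, f s + a * (t - s) ≤ f t) →
      ∀ t, g s * (f s + a * (t - s)) ≤ f s * g t) :
    Monotone fun s => g s / f s := by
  have continuous_of {h : ℝ → ℝ} (hh : ConvexOn ℝ univ h) : Continuous h :=
    continuousOn_univ.1 (hh.continuousOn isOpen_univ)
  have hasDeriv {h : ℝ → ℝ} (hh : ConvexOn ℝ univ h) (s : ℝ) :
      HasDerivWithinAt h (derivWithin h (Ioi s) s) (Ici s) s :=
    (hh.hasDerivWithinAt_rightDeriv_of_mem_interior (by simp)).Ici_of_Ioi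
  refine monotone_of_hasDerivWithinAt_Ici_nonneg
    ((continuous_of hg).div (continuous_of hf) fun s => (hpos s).ne')
    (fun s => (hasDeriv hg s).div (hasDeriv hf s) (hpos s).ne') fun s => ?_
  have := mul_rightDeriv_le_mul_rightDeriv_of_support hf hg (hsupp s)
  exact div_nonneg (by linarith) (sq_nonneg _)

end ConvexFunctionsOnTheLine

section BirkhoffOrthogonality

variable {E : Type*} [AddCommGroup E] [Module ℝ E] (p : Seminorm ℝ E)

/-- Birkhoff orthogonality of `x` to `y`: no point of the line through `x` in direction `y` has
smaller `p` than `x`. -/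
def BirkhoffOrthogonal (x y : E) : Prop :=
  ∀ t : ℝ, p x ≤ p (x + t • y)

lemma convexOn_seminorm_add_smul (x b : E) : ConvexOn ℝ univ fun t : ℝ => p (x + t • b) :=
  (p.convexOn.translate_right x).comp_linearMap (LinearMap.toSpanSingleton ℝ E b)

variable {p}

lemma birkhoffOrthogonal_of_support {x b : E} {a : ℝ} (hx : 0 < p x)
    (hsupp : ∀ t : ℝ, p x + a * t ≤ p (x + t • b)) :
    BirkhoffOrthogonal p x (p x • b - a • x) := by
  set y := p x • b - a • x with hy
  have of_pos (t : ℝ) (ht : 0 < 1 - t * a) : p x ≤ p (x + t • y) := by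
    have rescale : x + t • y = (1 - t * a) • (x + (t * p x / (1 - t * a)) • b) := by
      rw [smul_add, smul_smul, mul_div_cancel₀ _ ht.ne', hy]
      module
    calc p x = (1 - t * a) * (p x + a * (t * p x / (1 - t * a))) := by field_simp; ring
      _ ≤ (1 - t * a) * p (x + (t * p x / (1 - t * a)) • b) := by gcongr; exact hsupp _
      _ = p (x + t • y) := by rw [rescale, map_smul_eq_mul, Real.norm_of_nonneg ht.le]
  have hlocal : IsLocalMin (fun t : ℝ => p (x + t • y)) 0 := by
    have : ∀ᶠ t : ℝ in 𝓝 0, 0 < 1 - t * a :=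
      ContinuousAt.eventually_lt continuousAt_const (by fun_prop) (by simp)
    filter_upwards [this] with t ht
    simpa using of_pos t ht
  intro t
  simpa using IsMinOn.of_isLocalMin_of_convex_univ hlocal (convexOn_seminorm_add_smul p x y) t

end BirkhoffOrthogonality

lemma seminorm_pos_of_isBounded {F : Type*} [NormedAddCommGroup F] [NormedSpace ℝ F]
    {p : Seminorm ℝ F} (hp : Bornology.IsBounded {d | p d ≤ 1}) {x : F} (hx : x ≠ 0) : 0 < p x := by
  refine (apply_nonneg p x).lt_of_ne' fun hpx => ?_
  obtain ⟨R, hR⟩ := hp.exists_norm_le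
  have := hR (((R + 1) / ‖x‖) • x) (by simp [map_smul_eq_mul, hpx])
  rw [norm_smul, norm_div, norm_norm, div_mul_cancel₀ _ (norm_ne_zero_iff.2 hx)] at this
  linarith [Real.le_norm_self (R + 1)]

section AreaForm

variable {E : Type*} [NormedAddCommGroup E] [InnerProductSpace ℝ E] [Fact (finrank ℝ E = 2)]
  (o : Orientation ℝ E (Fin 2))

local notation "ω" => o.areaForm
local notation "J" => o.rightAngleRotation

lemma areaForm_smul_eq_add (x y d : E) : ω x y • d = ω d y • x + ω x d • y := by
  rcases eq_or_ne d 0 with rfl | hd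
  · simp
  refine InnerProductSpace.ext_inner_left_basis (𝕜 := ℝ) (o.basisRightAngleRotation d hd)
    fun i => ?_
  fin_cases i
  · have := o.inner_mul_areaForm_sub d x y
    simp [inner_add_right, inner_smul_right, o.areaForm_swap x d]
    linarith
  · simp [inner_add_right, inner_smul_right, o.areaForm_swap x d]
    ring

lemma exists_areaForm_eq_one {u : E} (hu : u ≠ 0) : ∃ z, ω u z = 1 := by
  refine ⟨(‖u‖ ^ 2)⁻¹ • J u, ?_⟩
  rw [map_smul, o.areaForm_rightAngleRotation_right, real_inner_self_eq_norm_sq, smul_eq_mul,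
    inv_mul_cancel₀ (by positivity)]

lemma exists_smul_eq_of_areaForm_eq_zero {x y : E} (hx : x ≠ 0) (h : ω x y = 0) :
    ∃ c : ℝ, y = c • x := by
  obtain ⟨z, hz⟩ := exists_areaForm_eq_one o hx
  refine ⟨ω y z, ?_⟩
  have := areaForm_smul_eq_add o x z y
  rwa [hz, h, one_smul, zero_smul, add_zero] at this

variable {p : Seminorm ℝ E}

/-- The antinorm of `p` with respect to the area form `ω`: the dual seminorm of `p` when `ω`
identifies the plane with its dual, `antinorm o p y = sup {|ω d y| : p d ≤ 1}`. It is only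
meaningful when the unit ball of `p` is bounded, for otherwise the supremum of seminorms is the
junk value `0`. -/
noncomputable def antinorm (p : Seminorm ℝ E) : Seminorm ℝ E :=
  ⨆ d : {d // p d ≤ 1}, (normSeminorm ℝ ℝ).comp (ω d)

lemma isLUB_antinorm (hp : Bornology.IsBounded {d | p d ≤ 1}) (y : E) :
    IsLUB ((fun d => |ω d y|) '' {d | p d ≤ 1}) (antinorm o p y) := by
  have : BddAbove (range fun d : {d // p d ≤ 1} => (normSeminorm ℝ ℝ).comp (ω (d : E))) := by
    obtain ⟨R, hR⟩ := hp.exists_norm_le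
    refine Seminorm.bddAbove_range_iff.2 fun y => ⟨R * ‖y‖, ?_⟩
    rintro _ ⟨d, rfl⟩
    exact (o.abs_areaForm_le _ _).trans (by gcongr; exact hR d d.2)
  have : Nonempty {d | p d ≤ 1} := ⟨0, by simp⟩
  rw [antinorm, Seminorm.iSup_apply ‹_›, image_eq_range]
  exact isLUB_ciSup (Seminorm.bddAbove_range_iff.1 ‹_› y)

lemma abs_areaForm_le_mul_antinorm (hp : Bornology.IsBounded {d | p d ≤ 1}) (x y : E) :
    |ω x y| ≤ p x * antinorm o p y := by
  rcases eq_or_ne x 0 with rfl | hx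
  · simp
  have hpx := seminorm_pos_of_isBounded hp hx
  have := (isLUB_antinorm o hp y).1 ⟨(p x)⁻¹ • x, by
    simp [map_smul_eq_mul, abs_of_pos hpx, hpx.ne'], rfl⟩
  simpa [abs_mul, abs_of_pos hpx, inv_mul_le_iff₀ hpx] using this

lemma antinorm_pos (hp : Bornology.IsBounded {d | p d ≤ 1}) {y : E} (hy : y ≠ 0) :
    0 < antinorm o p y := by
  obtain ⟨z, hz⟩ := exists_areaForm_eq_one o hy
  refine pos_of_mul_pos_right (a := p z) ?_ (apply_nonneg p z)
  calc (0 : ℝ) < |ω z y| := by simp [o.areaForm_swap z y, hz]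
    _ ≤ p z * antinorm o p y := abs_areaForm_le_mul_antinorm o hp z y

variable {o} in
lemma mul_abs_areaForm_le_of_birkhoffOrthogonal {x y : E} (h : BirkhoffOrthogonal p x y) (d : E) :
    p x * |ω d y| ≤ p d * |ω x y| := by
  rcases eq_or_ne (ω d y) 0 with hd | hd
  · simpa [hd] using mul_nonneg (apply_nonneg p d) (abs_nonneg _)
  have rescale : ω x y • d = ω d y • (x + (ω x d / ω d y) • y) := by
    rw [areaForm_smul_eq_add, smul_add, smul_smul, mul_div_cancel₀ _ hd]
  calc p x * |ω d y| ≤ p (x + (ω x d / ω d y) • y) * |ω d y| := by gcongr; exact h _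
    _ = p (ω x y • d) := by rw [rescale, map_smul_eq_mul, mul_comm, Real.norm_eq_abs]
    _ = p d * |ω x y| := by rw [map_smul_eq_mul, mul_comm, Real.norm_eq_abs]

lemma birkhoffOrthogonal_iff_mul_antinorm_eq (hp : Bornology.IsBounded {d | p d ≤ 1}) {x y : E} :
    BirkhoffOrthogonal p x y ↔ p x * antinorm o p y = |ω x y| := by
  constructor
  · intro h
    rcases eq_or_ne x 0 with rfl | hx
    · simp
    have hpx := seminorm_pos_of_isBounded hp hx
    refine le_antisymm ?_ (abs_areaForm_le_mul_antinorm o hp x y)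
    rw [← le_div_iff₀' hpx, isLUB_le_iff (isLUB_antinorm o hp y)]
    rintro _ ⟨d, hd : p d ≤ 1, rfl⟩
    rw [le_div_iff₀' hpx]
    exact (mul_abs_areaForm_le_of_birkhoffOrthogonal h d).trans
      (mul_le_of_le_one_left (abs_nonneg _) hd)
  · intro h t
    rcases eq_or_ne y 0 with rfl | hy
    · simp
    refine le_of_mul_le_mul_right ?_ (antinorm_pos o hp hy)
    calc p x * antinorm o p y = |ω (x + t • y) y| := by simp [h]
      _ ≤ p (x + t • y) * antinorm o p y := abs_areaForm_le_mul_antinorm o hp _ y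

lemma birkhoffOrthogonal_symm_of_antinorm_eq (hp : Bornology.IsBounded {d | p d ≤ 1}) {c : ℝ}
    (hc : ∀ x, antinorm o p x = c * p x) {x y : E} (h : BirkhoffOrthogonal p x y) :
    BirkhoffOrthogonal p y x := by
  rw [birkhoffOrthogonal_iff_mul_antinorm_eq o hp] at h ⊢
  rw [o.areaForm_swap, abs_neg, ← h, hc, hc]
  ring

lemma antinorm_support_of_support (hp : Bornology.IsBounded {d | p d ≤ 1})
    (hsymm : ∀ x y, BirkhoffOrthogonal p x y → BirkhoffOrthogonal p y x) {x b : E}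
    (hxb : ω x b ≠ 0) {a : ℝ} (hsupp : ∀ t : ℝ, p x + a * t ≤ p (x + t • b)) (t : ℝ) :
    antinorm o p x * (p x + a * t) ≤ p x * antinorm o p (x + t • b) := by
  have hpx : 0 < p x := seminorm_pos_of_isBounded hp (by rintro rfl; simp at hxb)
  set y := p x • b - a • x with hy
  have hyx : p y * antinorm o p x = p x * |ω x b| := by
    rw [(birkhoffOrthogonal_iff_mul_antinorm_eq o hp).1
      (hsymm x y (birkhoffOrthogonal_of_support hpx hsupp)), o.areaForm_swap, abs_neg]
    simp [hy, abs_mul, abs_of_pos hpx]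
  have hyt : |ω y (x + t • b)| = |ω x b| * |p x + a * t| := by
    rw [← abs_mul, ← abs_neg]
    congr 1
    simp [hy, o.areaForm_swap b x]
    ring
  have hpy : 0 < p y := by
    have : 0 < p y * antinorm o p x := hyx ▸ mul_pos hpx (abs_pos.2 hxb)
    exact pos_of_mul_pos_left this (apply_nonneg _ _)
  refine le_of_mul_le_mul_left ?_ hpy
  calc p y * (antinorm o p x * (p x + a * t)) = p x * (|ω x b| * (p x + a * t)) := by
        rw [← mul_assoc, hyx, mul_assoc]
    _ ≤ p x * |ω y (x + t • b)| := by rw [hyt]; gcongr; exact le_abs_self _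
    _ ≤ p x * (p y * antinorm o p (x + t • b)) := by
        gcongr; exact abs_areaForm_le_mul_antinorm o hp _ _
    _ = p y * (p x * antinorm o p (x + t • b)) := by ring

lemma antinorm_div_le_antinorm_div (hp : Bornology.IsBounded {d | p d ≤ 1})
    (hsymm : ∀ x y, BirkhoffOrthogonal p x y → BirkhoffOrthogonal p y x) {x y : E}
    (hxy : ω x y ≠ 0) : antinorm o p x / p x ≤ antinorm o p y / p y := by
  have area_line (s : ℝ) : ω (x + s • (y - x)) (y - x) = ω x y := by
    simp [o.areaForm_swap y x]
  have hpos (s : ℝ) : 0 < p (x + s • (y - x)) :=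
    seminorm_pos_of_isBounded hp fun h => hxy (by rw [← area_line s, h, map_zero]; rfl)
  have shift (s t : ℝ) : x + s • (y - x) + (t - s) • (y - x) = x + t • (y - x) := by module
  have := monotone_div_of_support (convexOn_seminorm_add_smul p x (y - x))
    (convexOn_seminorm_add_smul (antinorm o p) x (y - x)) hpos
    (fun s a hsupp t => by
      rw [← shift s t]
      refine antinorm_support_of_support o hp hsymm (by rwa [area_line]) (fun τ => ?_) (t - s)
      simpa [← shift s (s + τ)] using hsupp (s + τ)) zero_le_one
  simpa using this

lemma exists_antinorm_eq_mul (hp : Bornology.IsBounded {d | p d ≤ 1})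
    (hsymm : ∀ x y, BirkhoffOrthogonal p x y → BirkhoffOrthogonal p y x) :
    ∃ c, ∀ x, antinorm o p x = c * p x := by
  have ratio_eq {x y : E} (hxy : ω x y ≠ 0) : antinorm o p x / p x = antinorm o p y / p y :=
    (antinorm_div_le_antinorm_div o hp hsymm hxy).antisymm
      (antinorm_div_le_antinorm_div o hp hsymm (by rwa [o.areaForm_swap, neg_ne_zero]))
  have : Nontrivial E := Module.nontrivial_of_finrank_eq_succ (Fact.out : finrank ℝ E = 2)
  obtain ⟨u, hu⟩ := exists_ne (0 : E)
  refine ⟨antinorm o p u / p u, fun x => ?_⟩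
  rcases eq_or_ne x 0 with rfl | hx
  · simp
  rw [← div_eq_iff (seminorm_pos_of_isBounded hp hx).ne']
  rcases ne_or_eq (ω u x) 0 with hux | hux
  · exact (ratio_eq hux).symm
  · obtain ⟨c, rfl⟩ := exists_smul_eq_of_areaForm_eq_zero o hu hux
    have hc : ‖c‖ ≠ 0 := norm_ne_zero_iff.2 (left_ne_zero_of_smul hx)
    rw [map_smul_eq_mul, map_smul_eq_mul, mul_div_mul_left _ _ hc]

lemma birkhoffOrthogonal_symm_iff_exists_antinorm_eq_mul
    (hp : Bornology.IsBounded {d | p d ≤ 1}) :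
    (∀ x y, BirkhoffOrthogonal p x y → BirkhoffOrthogonal p y x) ↔
      ∃ c, ∀ x, antinorm o p x = c * p x :=
  ⟨exists_antinorm_eq_mul o hp,
    fun ⟨_, hc⟩ _ _ => birkhoffOrthogonal_symm_of_antinorm_eq o hp hc⟩

end AreaForm

section ConvexSetsOnTheLine

lemma eq_Icc_sInf_sSup_of_convex {A : Set ℝ} (hne : A.Nonempty) (hcomp : IsCompact A)
    (hconv : Convex ℝ A) : A = Icc (sInf A) (sSup A) ∧ sInf A ≤ sSup A :=
  ⟨eq_Icc_of_connected_compact ⟨hne, hconv.isPreconnected⟩ hcomp,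
    csInf_le_csSup hne hcomp.bddBelow hcomp.bddAbove⟩

lemma volume_add_Icc_zero_one {A : Set ℝ} (hne : A.Nonempty) (hcomp : IsCompact A)
    (hconv : Convex ℝ A) : volume (A + Icc 0 1) = volume A + 1 := by
  obtain ⟨hA, hle⟩ := eq_Icc_sInf_sSup_of_convex hne hcomp hconv
  rw [hA, Icc_add_Icc hle zero_le_one, Real.volume_Icc, Real.volume_Icc, ← ENNReal.ofReal_one,
    ← ENNReal.ofReal_add (sub_nonneg.2 hle) zero_le_one]
  congr 1
  ring

lemma isLUB_abs_image_sub_self {S : Set ℝ} (hne : S.Nonempty) (hcomp : IsCompact S)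
    (hconv : Convex ℝ S) : IsLUB ((fun s => |s|) '' (S - S)) (volume S).toReal := by
  obtain ⟨hS, hle⟩ := eq_Icc_sInf_sSup_of_convex hne hcomp hconv
  set a := sInf S
  set b := sSup S
  have hvol : (volume S).toReal = b - a := by
    rw [hS, Real.volume_Icc, ENNReal.toReal_ofReal (sub_nonneg.2 hle)]
  rw [hvol, hS]
  refine IsGreatest.isLUB ⟨⟨b - a, sub_mem_sub ⟨hle, le_rfl⟩ ⟨le_rfl, hle⟩,
    abs_of_nonneg (sub_nonneg.2 hle)⟩, ?_⟩
  rintro _ ⟨_, ⟨s, hs, t, ht, rfl⟩, rfl⟩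
  exact abs_sub_le_of_le_of_le hs.1 hs.2 ht.1 ht.2

end ConvexSetsOnTheLine

section SegmentSum

lemma slice_add_segment {β : Type*} [AddCommGroup β] [Module ℝ β] (C : Set (ℝ × β)) (t : β) :
    (fun s : ℝ => (s, t)) ⁻¹' (C + segment ℝ 0 (1, 0)) = (fun s => (s, t)) ⁻¹' C + Icc 0 1 := by
  have : segment ℝ (0 : ℝ × β) (1, 0) = (fun s => (s, 0)) '' Icc (0 : ℝ) 1 := by
    rw [← segment_eq_Icc zero_le_one, Prod.image_mk_segment_left, Prod.mk_zero_zero]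
  ext s
  simp [this, mem_add]

lemma prod_measure_add_segment {β : Type*} [NormedAddCommGroup β] [NormedSpace ℝ β]
    [MeasurableSpace β] [BorelSpace β] [SecondCountableTopology β] (μ : Measure β) [SFinite μ]
    {C : Set (ℝ × β)} (hcomp : IsCompact C) (hconv : Convex ℝ C) :
    (volume.prod μ) (C + segment ℝ 0 (1, 0)) = (volume.prod μ) C + μ (Prod.snd '' C) := by
  have hsum : IsCompact (C + segment ℝ 0 (1, 0)) := by
    rw [← convexHull_pair]
    exact hcomp.add ((toFinite _).isCompact_convexHull ℝ)
  have hsnd : MeasurableSet (Prod.snd '' C) := (hcomp.image continuous_snd).measurableSet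
  rw [Measure.prod_apply_symm hsum.measurableSet, Measure.prod_apply_symm hcomp.measurableSet,
    ← lintegral_indicator_one hsnd, ← lintegral_add_right _ (measurable_one.indicator hsnd)]
  refine lintegral_congr fun t => ?_
  rw [slice_add_segment]
  rcases ((fun s : ℝ => (s, t)) ⁻¹' C).eq_empty_or_nonempty with hempty | ⟨s, hs⟩
  · have ht : t ∉ Prod.snd '' C := by
      rintro ⟨q, hq, rfl⟩
      exact eq_empty_iff_forall_notMem.1 hempty q.1 hq
    simp [hempty, ht]
  · have ht : t ∈ Prod.snd '' C := ⟨_, hs, rfl⟩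
    have hslice_conv : Convex ℝ ((fun s : ℝ => (s, t)) ⁻¹' C) :=
      hconv.affine_preimage ((AffineMap.id ℝ ℝ).prod (AffineMap.const ℝ ℝ t))
    have hslice_comp : IsCompact ((fun s : ℝ => (s, t)) ⁻¹' C) :=
      (hcomp.image continuous_fst).of_isClosed_subset
        (hcomp.isClosed.preimage (by fun_prop)) fun s hs => ⟨(s, t), hs, rfl⟩
    rw [volume_add_Icc_zero_one ⟨s, hs⟩ hslice_comp hslice_conv, indicator_of_mem ht,
      Pi.one_apply]

end SegmentSum

section AreaCoordinates

variable {E : Type*} [NormedAddCommGroup E] [InnerProductSpace ℝ E] [Fact (finrank ℝ E = 2)]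
  (o : Orientation ℝ E (Fin 2))

local notation "ω" => o.areaForm

attribute [local instance] FiniteDimensional.of_fact_finrank_eq_two

variable {o} in
/-- The coordinates on the plane with respect to a basis `u`, `z` spanning unit area: by Cramer's
rule `y` is `ω y z • u + ω u y • z`. -/
noncomputable def areaCoords {u z : E} (h : ω u z = 1) : E ≃L[ℝ] ℝ × ℝ :=
  LinearEquiv.toContinuousLinearEquiv
    { (o.areaForm.flip z).prod (ω u) with
      invFun q := q.1 • u + q.2 • z
      left_inv y := by simpa [h] using (areaForm_smul_eq_add o u z y).symm
      right_inv q := by simp [h] }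

lemma addHaar_finTwoProd : (Basis.finTwoProd ℝ).addHaar = volume := by
  have unit_square : parallelepiped (Basis.finTwoProd ℝ) = Icc 0 1 ×ˢ Icc 0 1 := by
    ext q
    simp only [parallelepiped_basis_eq, Fin.forall_fin_two, Basis.coe_finTwoProd_repr,
      mem_ofPred_eq, mem_prod]
    rfl
  rw [Basis.addHaar_eq_iff, Basis.coe_parallelepiped, unit_square, Measure.volume_eq_prod,
    Measure.prod_prod]
  simp

variable [MeasurableSpace E] [BorelSpace E]

variable {o} in
lemma addHaar_eq_volume_of_areaForm_eq_one {b : Basis (Fin 2) ℝ E} (h : ω (b 0) (b 1) = 1) :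
    b.addHaar = volume := by
  have hb : ⇑b = ![b 0, b 1] := by ext i; fin_cases i <;> rfl
  rw [Basis.addHaar_eq_iff, Basis.coe_parallelepiped, ← o.measure_eq_volume,
    AlternatingMap.measure_parallelepiped, hb, ← o.areaForm_to_volumeForm, h, abs_one,
    ENNReal.ofReal_one]

variable {o} in
lemma measurePreserving_areaCoords_symm {u z : E} (h : ω u z = 1) :
    MeasurePreserving (areaCoords h).symm := by
  have hbasis : ((Basis.finTwoProd ℝ).map (areaCoords h).symm.toLinearEquiv).addHaar = volume :=
    addHaar_eq_volume_of_areaForm_eq_one (by simpa [areaCoords] using h)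
  refine ⟨(areaCoords h).symm.continuous.measurable, ?_⟩
  rw [← hbasis, ← Basis.map_addHaar, addHaar_finTwoProd]

lemma volume_add_segment {K : Set E} (hcomp : IsCompact K) (hconv : Convex ℝ K) {u : E}
    (hu : u ≠ 0) : volume (K + segment ℝ 0 u) = volume K + volume (ω u '' K) := by
  obtain ⟨z, hz⟩ := exists_areaForm_eq_one o hu
  set e := areaCoords hz
  have hvol (S : Set E) : volume (e '' S) = volume S := by
    rw [e.image_eq_preimage_symm]
    exact (measurePreserving_areaCoords_symm hz).measure_preimage_emb
      e.symm.toHomeomorph.measurableEmbedding S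
  have heu : e u = (1, 0) := Prod.ext hz (o.areaForm_apply_self u)
  have hsum : e '' (K + segment ℝ 0 u) = e '' K + segment ℝ 0 (1, 0) := by
    rw [image_add, ← heu, ← map_zero e]
    congr 1
    exact image_segment ℝ (e : E →ₗ[ℝ] ℝ × ℝ).toAffineMap 0 u
  have hsnd : Prod.snd '' (e '' K) = ω u '' K := image_image _ _ _
  rw [← hvol, hsum, ← hvol K, ← hsnd]
  exact prod_measure_add_segment volume (hcomp.image e.continuous)
    (hconv.is_linear_image e.isLinear)

end AreaCoordinates

section Translates

lemma vadd_inter_vadd_nonempty_iff {G : Type*} [AddCommGroup G] {A B : Set G} {v w : G} :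
    ((v +ᵥ A) ∩ (w +ᵥ B)).Nonempty ↔ w - v ∈ A - B := by
  simp only [Set.Nonempty, mem_inter_iff, mem_vadd_set, mem_sub, vadd_eq_add]
  constructor
  · rintro ⟨_, ⟨a, ha, rfl⟩, b, hb, hab⟩
    exact ⟨a, ha, b, hb, by rw [sub_eq_sub_iff_add_eq_add, add_comm, ← hab, add_comm]⟩
  · rintro ⟨a, ha, b, hb, hab⟩
    exact ⟨v + a, ⟨a, ha, rfl⟩, b, hb, by rw [add_comm v, ← sub_eq_sub_iff_add_eq_add.1 hab]⟩

lemma interior_sub_of_convex {V : Type*} [AddCommGroup V] [Module ℝ V] [TopologicalSpace V]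
    [IsTopologicalAddGroup V] [ContinuousSMul ℝ V] {A B : Set V} (hA : Convex ℝ A)
    (hB : Convex ℝ B) (hA' : (interior A).Nonempty) (hB' : (interior B).Nonempty) :
    interior (A - B) = interior A - interior B := by
  have hopen : IsOpen (interior A - interior B) := isOpen_interior.sub_right
  have hdense : A - B ⊆ closure (interior A - interior B) := by
    rintro _ ⟨a, ha, b, hb, rfl⟩
    have mem_closure_interior {C : Set V} (hC : Convex ℝ C) (hC' : (interior C).Nonempty) {x : V}
        (hx : x ∈ C) : x ∈ closure (interior C) := by
      rw [hC.closure_interior_eq_closure_of_nonempty_interior hC']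
      exact subset_closure hx
    exact map_mem_closure₂ continuous_sub (mem_closure_interior hA hA' ha)
      (mem_closure_interior hB hB' hb) fun _ hx _ hy => sub_mem_sub hx hy
  have hne : (interior (interior A - interior B)).Nonempty := by
    rw [hopen.interior_eq]
    exact hA'.sub hB'
  refine Subset.antisymm ((interior_mono hdense).trans_eq ?_)
    (interior_maximal (sub_subset_sub interior_subset interior_subset) hopen)
  rw [(hA.interior.sub hB.interior).interior_closure_eq_interior_of_nonempty_interior hne,
    hopen.interior_eq]

lemma convexHull_vadd_union_vadd {V : Type*} [AddCommGroup V] [Module ℝ V] {K : Set V}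
    (hK : Convex ℝ K) (v w : V) :
    convexHull ℝ ((v +ᵥ K) ∪ (w +ᵥ K)) = v +ᵥ (K + segment ℝ 0 (w - v)) := by
  have sum_pair : K + {0, w - v} = K ∪ ((w - v) +ᵥ K) := by
    rw [insert_eq, add_union, singleton_zero, add_zero, add_comm K, singleton_add]
    rfl
  have union_eq : (v +ᵥ K) ∪ (w +ᵥ K) = v +ᵥ (K + {0, w - v}) := by
    rw [sum_pair, vadd_set_union, vadd_vadd, add_sub_cancel]
  rw [union_eq, convexHull_vadd, convexHull_add, convexHull_pair, hK.convexHull_eq]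

end Translates

namespace IsConvexBody

section DifferenceBody

variable {n : ℕ} {K : Set (EuclideanSpace ℝ (Fin n))}

lemma nonempty (hK : IsConvexBody K) : K.Nonempty :=
  hK.2.2.mono interior_subset

lemma convex_sub_self (hK : IsConvexBody K) : Convex ℝ (K - K) :=
  hK.2.1.sub hK.2.1

lemma isCompact_sub_self (hK : IsConvexBody K) : IsCompact (K - K) := by
  rw [sub_eq_add_neg]
  exact hK.1.add hK.1.neg

lemma interior_sub_self (hK : IsConvexBody K) : interior (K - K) = interior K - interior K :=
  interior_sub_of_convex hK.2.1 hK.2.1 hK.2.2 hK.2.2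

lemma sub_self_mem_nhds_zero (hK : IsConvexBody K) : K - K ∈ 𝓝 0 := by
  obtain ⟨x, hx⟩ := hK.2.2
  rw [← mem_interior_iff_mem_nhds, hK.interior_sub_self]
  exact ⟨x, hx, x, hx, sub_self x⟩

lemma balanced_sub_self (hK : IsConvexBody K) : Balanced ℝ (K - K) :=
  (balanced_iff_neg_mem hK.convex_sub_self).2 fun x hx => by
    rwa [← Set.neg_mem_neg, neg_neg, neg_sub]

/-- The seminorm whose unit ball is the difference body `K - K`. It is half the norm with unit ball
`½(K - K)`, so that `K` touches its translates by the vectors of seminorm exactly `1`. -/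
noncomputable def differenceSeminorm (hK : IsConvexBody K) :
    Seminorm ℝ (EuclideanSpace ℝ (Fin n)) :=
  gaugeSeminorm hK.balanced_sub_self hK.convex_sub_self
    (absorbent_nhds_zero hK.sub_self_mem_nhds_zero)

lemma gauge_half_smul_sub_self (hK : IsConvexBody K) (x : EuclideanSpace ℝ (Fin n)) :
    gauge ((2 : ℝ)⁻¹ • (K - K)) x = 2 * hK.differenceSeminorm x := by
  rw [gauge_smul_left_of_nonneg (by norm_num : (0 : ℝ) ≤ 2⁻¹), inv_inv]
  rfl

lemma differenceSeminorm_le_one_iff (hK : IsConvexBody K) {x : EuclideanSpace ℝ (Fin n)} :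
    hK.differenceSeminorm x ≤ 1 ↔ x ∈ K - K := by
  have := gauge_le_one_iff_mem_closure (x := x) hK.convex_sub_self hK.sub_self_mem_nhds_zero
  rwa [hK.isCompact_sub_self.isClosed.closure_eq] at this

lemma differenceSeminorm_lt_one_iff (hK : IsConvexBody K) {x : EuclideanSpace ℝ (Fin n)} :
    hK.differenceSeminorm x < 1 ↔ x ∈ interior K - interior K := by
  rw [← hK.interior_sub_self]
  exact gauge_lt_one_iff_mem_interior hK.convex_sub_self hK.sub_self_mem_nhds_zero

lemma isBounded_differenceSeminorm_le_one (hK : IsConvexBody K) :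
    Bornology.IsBounded {x | hK.differenceSeminorm x ≤ 1} :=
  hK.isCompact_sub_self.isBounded.subset fun _ => hK.differenceSeminorm_le_one_iff.1

lemma touching_vadd_iff (hK : IsConvexBody K) {v w : EuclideanSpace ℝ (Fin n)} :
    Touching (v +ᵥ K) (w +ᵥ K) ↔ hK.differenceSeminorm (w - v) = 1 := by
  rw [Touching, interior_vadd, interior_vadd, ← not_nonempty_iff_eq_empty,
    vadd_inter_vadd_nonempty_iff, vadd_inter_vadd_nonempty_iff,
    ← hK.differenceSeminorm_le_one_iff, ← hK.differenceSeminorm_lt_one_iff, not_lt, le_antisymm_iff]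

end DifferenceBody

section Plane

open scoped EuclideanSpace

variable {K : Set (EuclideanSpace ℝ (Fin 2))}
  (o : Orientation ℝ (EuclideanSpace ℝ (Fin 2)) (Fin 2))

lemma toReal_volume_areaForm_image (hK : IsConvexBody K) (u : EuclideanSpace ℝ (Fin 2)) :
    (volume (o.areaForm u '' K)).toReal = antinorm o hK.differenceSeminorm u := by
  have hcont : Continuous (o.areaForm u) := LinearMap.continuous_of_finiteDimensional _
  have hball : {d | hK.differenceSeminorm d ≤ 1} = K - K :=
    ext fun _ => hK.differenceSeminorm_le_one_iff
  have himage : (fun s => |s|) '' (o.areaForm u '' K - o.areaForm u '' K) =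
      (fun d => |o.areaForm d u|) '' {d | hK.differenceSeminorm d ≤ 1} := by
    rw [hball, ← image_sub, image_image]
    exact image_congr fun d _ => by rw [o.areaForm_swap, abs_neg]
  have hlub := isLUB_abs_image_sub_self (hK.nonempty.image _) (hK.1.image hcont)
    (hK.2.1.is_linear_image (o.areaForm u).isLinear)
  rw [himage] at hlub
  exact hlub.unique (isLUB_antinorm o hK.isBounded_differenceSeminorm_le_one u)

lemma toReal_volume_convexHull_vadd_union_vadd (hK : IsConvexBody K)
    {v w : EuclideanSpace ℝ (Fin 2)} (hvw : v ≠ w) :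
    (volume (convexHull ℝ ((v +ᵥ K) ∪ (w +ᵥ K)))).toReal =
      (volume K).toReal + antinorm o hK.differenceSeminorm (w - v) := by
  have hcont : Continuous (o.areaForm (w - v)) := LinearMap.continuous_of_finiteDimensional _
  rw [convexHull_vadd_union_vadd hK.2.1, measure_vadd,
    volume_add_segment o hK.1 hK.2.1 (sub_ne_zero.2 hvw.symm),
    ENNReal.toReal_add hK.1.measure_lt_top.ne (hK.1.image hcont).measure_lt_top.ne,
    hK.toReal_volume_areaForm_image]

lemma tcvp_iff_exists_antinorm_eq_mul (hK : IsConvexBody K) :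
    TCVP K ↔ ∃ c, ∀ x, antinorm o hK.differenceSeminorm x = c * hK.differenceSeminorm x := by
  have area {v w : EuclideanSpace ℝ (Fin 2)} (h : hK.differenceSeminorm (w - v) = 1) :
      (volume (convexHull ℝ ((v +ᵥ K) ∪ (w +ᵥ K)))).toReal =
        (volume K).toReal + antinorm o hK.differenceSeminorm (w - v) :=
    hK.toReal_volume_convexHull_vadd_union_vadd o (by rintro rfl; simp at h)
  simp only [TCVP, hK.touching_vadd_iff]
  constructor
  · rintro ⟨c, hc⟩
    refine ⟨c - (volume K).toReal, fun x => ?_⟩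
    rcases eq_or_ne x 0 with rfl | hx
    · simp
    have hpos := seminorm_pos_of_isBounded hK.isBounded_differenceSeminorm_le_one hx
    have hunit : hK.differenceSeminorm ((hK.differenceSeminorm x)⁻¹ • x - 0) = 1 := by
      rw [sub_zero, map_smul_eq_mul, Real.norm_of_nonneg (inv_nonneg.2 hpos.le),
        inv_mul_cancel₀ hpos.ne']
    have := (area hunit).symm.trans (hc _ _ hunit)
    rw [sub_zero, map_smul_eq_mul, Real.norm_of_nonneg (inv_nonneg.2 hpos.le)] at this
    field_simp at this
    linarith
  · rintro ⟨c, hc⟩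
    refine ⟨(volume K).toReal + c, fun v w h => ?_⟩
    rw [area h, hc, h, mul_one]

end Plane

end IsConvexBody

theorem stmt9 (K : Set (EuclideanSpace ℝ (Fin 2))) (hK : IsConvexBody K) :
    TCVP K ↔
      ∀ x y : EuclideanSpace ℝ (Fin 2),
        (∀ t : ℝ, gauge ((2 : ℝ)⁻¹ • (K - K)) x ≤ gauge ((2 : ℝ)⁻¹ • (K - K)) (x + t • y)) →
        (∀ t : ℝ, gauge ((2 : ℝ)⁻¹ • (K - K)) y ≤ gauge ((2 : ℝ)⁻¹ • (K - K)) (y + t • x)) := by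
  have : Fact (finrank ℝ (EuclideanSpace ℝ (Fin 2)) = 2) := ⟨finrank_euclideanSpace_fin⟩
  let o := (EuclideanSpace.basisFun (Fin 2) ℝ).toBasis.orientation
  rw [hK.tcvp_iff_exists_antinorm_eq_mul o,
    ← birkhoffOrthogonal_symm_iff_exists_antinorm_eq_mul o hK.isBounded_differenceSeminorm_le_one]
  simp only [hK.gauge_half_smul_sub_self, mul_le_mul_iff_right₀ two_pos, BirkhoffOrthogonal]
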